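/- arXiv:1106.6221 — 2 statements merged into one kernel-verified Lean document; each statement's English description precedes it below -/
import Mathlib

section
/- Let p,q>1, a>0, α,β≥0 with α+pβ = a(pq−1)+2(p+1), and let A,B,K,R,T₀ be positive constants with T₀ ≥ R. Fix δ ∈ (0,(pq−1)/(2p+2)) and set K₀ = [ a^{2p+2} 2^{α+pβ+2p+1} (q+2)^{2p+2} (q+1)^p / (A B^p) · (1 − 2^{−aδ})^{−2p−2} ]^{1/(pq−1)} and T₁ = max{T₀, (2q+3)U(0)/U'(0)}. Suppose U,V ∈ C²([0,T]) satisfy: U(t) ≥ K t^a for t ≥ T₀; U''(t) ≥ A(t+R)^{−α}|V(t)|^p for t ≥ 0; V''(t) ≥ B(t+R)^{−β}|U(t)|^q for t ≥ 0; and U(0) ≥ 0, U'(0) > 0, V(0) ≥ 0, V'(0) > 0. If K ≥ K₀, then T ≤ 2T₁. -/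
open Real Set

/-- A function with nonnegative derivative on a compact interval does not decrease across it. -/
lemma le_of_hasDerivWithinAt_nonneg {f f' : ℝ → ℝ} {x y : ℝ} (hxy : x ≤ y)
    (hf : ∀ t ∈ Icc x y, HasDerivWithinAt f (f' t) (Icc x y) t)
    (hf' : ∀ t ∈ Icc x y, 0 ≤ f' t) : f x ≤ f y :=
  monotoneOn_of_hasDerivWithinAt_nonneg (convex_Icc x y) (fun t ht => (hf t ht).continuousWithinAt)
    (fun t ht => (hf t (interior_subset ht)).mono interior_subset)
    (fun t ht => hf' t (interior_subset ht)) (left_mem_Icc.2 hxy) (right_mem_Icc.2 hxy) hxy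

/-- A positive solution of `W' ≥ E t^{-(aγ+1)} W^{1+γ}` on `[x, 2x]` is quantitatively small
at `x`. -/
lemma lt_rpow_neg_of_superlinear_growth {W W' : ℝ → ℝ} {x a γ E : ℝ} (hx : 0 < x) (ha : 0 < a)
    (hγ : 0 < γ)
    (hW : ∀ t ∈ Icc x (2 * x), HasDerivWithinAt W (W' t) (Icc x (2 * x)) t)
    (hpos : ∀ t ∈ Icc x (2 * x), 0 < W t)
    (hgrow : ∀ t ∈ Icc x (2 * x), E * t ^ (-(a * γ + 1)) * W t ^ (1 + γ) ≤ W' t) :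
    E / a * (x ^ (-(a * γ)) * (1 - 2 ^ (-(a * γ)))) < W x ^ (-γ) := by
  have hle : x ≤ 2 * x := by linarith
  have key := le_of_hasDerivWithinAt_nonneg
    (f := fun t => E / a * t ^ (-(a * γ)) - W t ^ (-γ))
    (f' := fun t => E / a * (1 * (-(a * γ)) * t ^ (-(a * γ) - 1))
      - W' t * (-γ) * W t ^ (-γ - 1)) hle ?_ ?_
  · have h2 : 0 < W (2 * x) ^ (-γ) := rpow_pos_of_pos (hpos _ (right_mem_Icc.2 hle)) _
    rw [mul_rpow two_pos.le hx.le] at key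
    linear_combination key + h2
  · intro t ht
    have ht0 : 0 < t := hx.trans_le ht.1
    exact (((hasDerivWithinAt_id t _).rpow_const (Or.inl ht0.ne')).const_mul _).sub
      ((hW t ht).rpow_const (Or.inl (hpos t ht).ne'))
  · intro t ht
    have hWt := hpos t ht
    have h1 : W t ^ (-γ - 1) * W t ^ (1 + γ) = 1 := by
      rw [← rpow_add hWt, show -γ - 1 + (1 + γ) = 0 by ring, rpow_zero]
    have h2 := mul_le_mul_of_nonneg_left (hgrow t ht)
      (mul_pos hγ (rpow_pos_of_pos hWt (-γ - 1))).le
    have h3 : -(a * γ) - 1 = -(a * γ + 1) := by ring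
    have h4 : E / a * (1 * (-(a * γ)) * t ^ (-(a * γ + 1)))
        = -(γ * E * t ^ (-(a * γ + 1))) := by field_simp
    simp only [h3, h4]
    linear_combination h2 - γ * E * t ^ (-(a * γ + 1)) * h1

/-- The first-order inequality obtained from the second-order system by successive integrations
against powers of `W'`. -/
lemma first_order_of_second_order_system {p q α β A B R T : ℝ} {W W' W'' V V' V'' : ℝ → ℝ}
    (hp : 1 < p) (hq : 1 < q) (hα : 0 ≤ α) (hβ : 0 ≤ β) (hA : 0 < A) (hB : 0 < B) (hR : 0 < R)
    (hW : ∀ t ∈ Icc (0:ℝ) T, HasDerivWithinAt W (W' t) (Icc 0 T) t)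
    (hW' : ∀ t ∈ Icc (0:ℝ) T, HasDerivWithinAt W' (W'' t) (Icc 0 T) t)
    (hV : ∀ t ∈ Icc (0:ℝ) T, HasDerivWithinAt V (V' t) (Icc 0 T) t)
    (hV' : ∀ t ∈ Icc (0:ℝ) T, HasDerivWithinAt V' (V'' t) (Icc 0 T) t)
    (hW0 : W 0 = 0)
    (hWn : ∀ t ∈ Icc (0:ℝ) T, 0 ≤ W t) (hWp : ∀ t ∈ Icc (0:ℝ) T, 0 < W' t)
    (hVn : ∀ t ∈ Icc (0:ℝ) T, 0 ≤ V t) (hVp : ∀ t ∈ Icc (0:ℝ) T, 0 < V' t)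
    (h2 : ∀ t ∈ Icc (0:ℝ) T, A * (t + R) ^ (-α) * V t ^ p ≤ W'' t)
    (h3 : ∀ t ∈ Icc (0:ℝ) T, B * (t + R) ^ (-β) * W t ^ q ≤ V'' t) :
    ∀ t ∈ Icc (0:ℝ) T, A * (B / ((q + 1) * (q + 2))) ^ p / (q + 2) * (t + R) ^ (-(α + p * β))
      * W t ^ (p * (q + 2) + 1) ≤ W' t ^ (2 * p + 2) := by
  have hW''n : ∀ t ∈ Icc (0:ℝ) T, 0 ≤ W'' t := fun t ht => by
    have h := hVn t ht
    have : 0 < t + R := by linarith [ht.1]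
    exact le_trans (by positivity) (h2 t ht)
  have hsub : ∀ t ∈ Icc (0:ℝ) T, Icc 0 t ⊆ Icc 0 T := fun t ht => Icc_subset_Icc_right ht.2
  have hdecr : ∀ {c s t : ℝ}, 0 ≤ c → s ∈ Icc 0 t → (t + R) ^ (-c) ≤ (s + R) ^ (-c) :=
    fun hc hs => rpow_le_rpow_of_nonpos (by linarith [hs.1]) (by linarith [hs.2]) (by linarith)
  have step1 : ∀ t ∈ Icc (0:ℝ) T,
      B / (q + 1) * (t + R) ^ (-β) * W t ^ (q + 1) ≤ W' t * V' t := by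
    intro t ht
    have h0 : (0:ℝ) ∈ Icc (0:ℝ) T := ⟨le_rfl, ht.1.trans ht.2⟩
    have key := le_of_hasDerivWithinAt_nonneg
      (f := fun s => W' s * V' s - B / (q + 1) * (t + R) ^ (-β) * W s ^ (q + 1))
      (f' := fun s => W'' s * V' s + W' s * V'' s
        - B / (q + 1) * (t + R) ^ (-β) * (W' s * (q + 1) * W s ^ (q + 1 - 1))) ht.1 ?_ ?_
    · simp only [hW0] at key
      rw [zero_rpow (by linarith)] at key
      have := mul_pos (hWp 0 h0) (hVp 0 h0)
      linarith
    · intro s hs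
      have hsT := hsub t ht hs
      exact ((((hW' s hsT).mul (hV' s hsT)).sub
        (((hW s hsT).rpow_const (Or.inr (by linarith))).const_mul _)).mono (hsub t ht))
    · intro s hs
      have hsT := hsub t ht hs
      have e1 : 0 ≤ W'' s * V' s := mul_nonneg (hW''n s hsT) (hVp s hsT).le
      have e2 : B * (t + R) ^ (-β) * W s ^ q ≤ V'' s :=
        le_trans (by have := hdecr hβ hs; have := rpow_nonneg (hWn s hsT) q; gcongr) (h3 s hsT)
      have e3 := mul_le_mul_of_nonneg_left e2 (hWp s hsT).le
      have e4 : B / (q + 1) * (t + R) ^ (-β) * (W' s * (q + 1) * W s ^ (q + 1 - 1))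
          = W' s * (B * (t + R) ^ (-β) * W s ^ q) := by
        have : q + 1 ≠ 0 := by linarith
        rw [add_sub_cancel_right]; field_simp
      simp only [e4]; linarith
  have step2 : ∀ t ∈ Icc (0:ℝ) T,
      B / ((q + 1) * (q + 2)) * (t + R) ^ (-β) * W t ^ (q + 2) ≤ W' t ^ 2 * V t := by
    intro t ht
    have h0 : (0:ℝ) ∈ Icc (0:ℝ) T := ⟨le_rfl, ht.1.trans ht.2⟩
    have key := le_of_hasDerivWithinAt_nonneg
      (f := fun s => W' s * W' s * V s
        - B / ((q + 1) * (q + 2)) * (t + R) ^ (-β) * W s ^ (q + 2))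
      (f' := fun s => (W'' s * W' s + W' s * W'' s) * V s + W' s * W' s * V' s
        - B / ((q + 1) * (q + 2)) * (t + R) ^ (-β) * (W' s * (q + 2) * W s ^ (q + 2 - 1)))
        ht.1 ?_ ?_
    · simp only [hW0] at key
      rw [zero_rpow (by linarith)] at key
      have := mul_nonneg (mul_self_nonneg (W' 0)) (hVn 0 h0)
      linarith
    · intro s hs
      have hsT := hsub t ht hs
      exact (((((hW' s hsT).mul (hW' s hsT)).mul (hV s hsT)).sub
        (((hW s hsT).rpow_const (Or.inr (by linarith))).const_mul _)).mono (hsub t ht))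
    · intro s hs
      have hsT := hsub t ht hs
      have e1 : 0 ≤ W'' s * W' s * V s :=
        mul_nonneg (mul_nonneg (hW''n s hsT) (hWp s hsT).le) (hVn s hsT)
      have e2 : B / (q + 1) * (t + R) ^ (-β) * W s ^ (q + 1) ≤ W' s * V' s :=
        le_trans (by have := hdecr hβ hs; have := rpow_nonneg (hWn s hsT) (q + 1); gcongr)
          (step1 s hsT)
      have e3 := mul_le_mul_of_nonneg_left e2 (hWp s hsT).le
      have e4 : B / ((q + 1) * (q + 2)) * (t + R) ^ (-β) * (W' s * (q + 2) * W s ^ (q + 2 - 1))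
          = W' s * (B / (q + 1) * (t + R) ^ (-β) * W s ^ (q + 1)) := by
        have : q + 1 ≠ 0 := by linarith
        have : q + 2 ≠ 0 := by linarith
        rw [show q + 2 - 1 = q + 1 by ring]; field_simp
      simp only [e4]; linarith
  have step3 : ∀ t ∈ Icc (0:ℝ) T, A * (B / ((q + 1) * (q + 2))) ^ p * (t + R) ^ (-(α + p * β))
      * W t ^ (p * (q + 2)) ≤ W' t ^ (2 * p) * W'' t := by
    intro t ht
    have htR : 0 < t + R := by linarith [ht.1]
    have hWt := hWn t ht
    have hWt' := hWp t ht
    have hVt := hVn t ht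
    have e1 := rpow_le_rpow (by positivity) (step2 t ht) (show 0 ≤ p by linarith)
    rw [mul_rpow (by positivity) (by positivity), mul_rpow (by positivity) (by positivity),
      mul_rpow (by positivity) (by positivity), ← rpow_mul hWt, ← rpow_mul htR.le,
      ← rpow_natCast (W' t) 2, ← rpow_mul hWt'.le, Nat.cast_ofNat, mul_comm (q + 2) p] at e1
    have e2 := mul_le_mul_of_nonneg_left e1 (show 0 ≤ A * (t + R) ^ (-α) by positivity)
    have e3 := mul_le_mul_of_nonneg_left (h2 t ht) (show 0 ≤ W' t ^ (2 * p) by positivity)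
    have e4 : (t + R) ^ (-(α + p * β)) = (t + R) ^ (-α) * (t + R) ^ (-β * p) := by
      rw [← rpow_add htR]; ring_nf
    rw [e4]
    linarith
  intro t ht
  have h0 : (0:ℝ) ∈ Icc (0:ℝ) T := ⟨le_rfl, ht.1.trans ht.2⟩
  have hm : 0 < p * (q + 2) + 1 := by nlinarith
  set D := A * (B / ((q + 1) * (q + 2))) ^ p with hD
  have hDpos : 0 < D := by positivity
  have key := le_of_hasDerivWithinAt_nonneg
    (f := fun s => W' s ^ (2 * p + 2)
      - D / (q + 2) * (t + R) ^ (-(α + p * β)) * W s ^ (p * (q + 2) + 1))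
    (f' := fun s => W'' s * (2 * p + 2) * W' s ^ (2 * p + 2 - 1)
      - D / (q + 2) * (t + R) ^ (-(α + p * β))
        * (W' s * (p * (q + 2) + 1) * W s ^ (p * (q + 2) + 1 - 1))) ht.1 ?_ ?_
  · simp only [hW0] at key
    rw [zero_rpow hm.ne'] at key
    have := rpow_pos_of_pos (hWp 0 h0) (2 * p + 2)
    linarith
  · intro s hs
    have hsT := hsub t ht hs
    exact ((((hW' s hsT).rpow_const (Or.inr (by linarith))).sub
      (((hW s hsT).rpow_const (Or.inr (by nlinarith))).const_mul _)).mono (hsub t ht))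
  · intro s hs
    have hsT := hsub t ht hs
    have hWs := hWn s hsT
    have hWs' := hWp s hsT
    have htR : 0 < t + R := by linarith [ht.1]
    have e2 : D * (t + R) ^ (-(α + p * β)) * W s ^ (p * (q + 2)) ≤ W' s ^ (2 * p) * W'' s :=
      le_trans (by
        have := hdecr (c := α + p * β) (by positivity) hs
        gcongr) (step3 s hsT)
    have e3 := mul_le_mul_of_nonneg_left e2 (mul_pos (show 0 < 2 * p + 2 by linarith) hWs').le
    have e4 : W' s ^ (2 * p + 2 - 1) = W' s * W' s ^ (2 * p) := by
      rw [show 2 * p + 2 - 1 = 1 + 2 * p by ring, rpow_add hWs', rpow_one]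
    have e5 : (p * (q + 2) + 1) / (q + 2) ≤ 2 * p + 2 := by
      rw [div_le_iff₀ (by linarith)]; nlinarith
    have e6 := mul_le_mul_of_nonneg_right e5
      (show 0 ≤ W' s * (D * (t + R) ^ (-(α + p * β)) * W s ^ (p * (q + 2))) by positivity)
    have e7 : D / (q + 2) * (t + R) ^ (-(α + p * β)) * (W' s * (p * (q + 2) + 1)
        * W s ^ (p * (q + 2))) = (p * (q + 2) + 1) / (q + 2) *
        (W' s * (D * (t + R) ^ (-(α + p * β)) * W s ^ (p * (q + 2)))) := by ring
    simp only [e4, add_sub_cancel_right, e7]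
    linarith

/-- The shift `U - U 0` costs at most a factor `2 ^ p` in the threshold. -/
lemma rpow_shift_ratio_le {p q : ℝ} (hp : 1 < p) (hq : 1 < q) :
    ((2 * q + 4) / (2 * q + 3)) ^ (p * q - 1) ≤ 2 ^ p := by
  have hb : 1 ≤ (2 * q + 4) / (2 * q + 3) := by rw [le_div_iff₀] <;> linarith
  have h1 : ((2 * q + 4) / (2 * q + 3)) ^ q ≤ 2 := by
    have e : (2 * q + 4) / (2 * q + 3) ≤ exp (1 / (2 * q + 3)) := by
      have := add_one_le_exp (1 / (2 * q + 3))
      have h : (2 * q + 4) / (2 * q + 3) = 1 / (2 * q + 3) + 1 := by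
        have : 2 * q + 3 ≠ 0 := by linarith
        field_simp; ring
      rwa [h]
    calc ((2 * q + 4) / (2 * q + 3)) ^ q ≤ exp (1 / (2 * q + 3)) ^ q :=
          rpow_le_rpow (by linarith) e (by linarith)
      _ = exp (q / (2 * q + 3)) := by rw [← exp_mul]; ring_nf
      _ ≤ exp (log 2) := by
          apply exp_le_exp.2
          have : q / (2 * q + 3) ≤ 1 / 2 := by rw [div_le_div_iff₀] <;> linarith
          linarith [log_two_gt_d9]
      _ = 2 := exp_log two_pos
  calc ((2 * q + 4) / (2 * q + 3)) ^ (p * q - 1)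
      ≤ ((2 * q + 4) / (2 * q + 3)) ^ (q * p) := rpow_le_rpow_of_exponent_le hb (by linarith)
    _ = (((2 * q + 4) / (2 * q + 3)) ^ q) ^ p := rpow_mul (by linarith) _ _
    _ ≤ 2 ^ p := rpow_le_rpow (by positivity) h1 (by linarith)

/-- Blow-up lemma for systems of ordinary differential inequalities with a
critical balance of exponents: if `U, V ∈ C²([0,T])` satisfy
`U(t) ≥ K t^a` for `t ≥ T₀`, `U'' ≥ A(t+R)^{-α}|V|^p`, `V'' ≥ B(t+R)^{-β}|U|^q`,
with positive initial slopes and nonnegative initial data, and `K ≥ K₀`,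
then `T ≤ 2 T₁`. -/
theorem blowup_ODI_system
    (p q a α β A B K R T₀ T δ : ℝ)
    (U U' U'' V V' V'' : ℝ → ℝ)
    (hp : 1 < p) (hq : 1 < q) (ha : 0 < a) (hα : 0 ≤ α) (hβ : 0 ≤ β)
    (hbal : α + p * β = a * (p * q - 1) + 2 * (p + 1))
    (hA : 0 < A) (hB : 0 < B) (hK : 0 < K) (hR : 0 < R) (hT₀pos : 0 < T₀)
    (hT₀R : R ≤ T₀)
    (hδ : δ ∈ Ioo 0 ((p * q - 1) / (2 * p + 2)))
    -- U and V are C² on [0,T], with first derivatives U', V' and second derivatives U'', V''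
    (hU' : ∀ t ∈ Icc (0:ℝ) T, HasDerivWithinAt U (U' t) (Icc 0 T) t)
    (hU'' : ∀ t ∈ Icc (0:ℝ) T, HasDerivWithinAt U' (U'' t) (Icc 0 T) t)
    (hUc : ContinuousOn U'' (Icc 0 T))
    (hV' : ∀ t ∈ Icc (0:ℝ) T, HasDerivWithinAt V (V' t) (Icc 0 T) t)
    (hV'' : ∀ t ∈ Icc (0:ℝ) T, HasDerivWithinAt V' (V'' t) (Icc 0 T) t)
    (hVc : ContinuousOn V'' (Icc 0 T))
    -- the differential inequalities
    (h1 : ∀ t ∈ Icc (0:ℝ) T, T₀ ≤ t → K * t ^ a ≤ U t)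
    (h2 : ∀ t ∈ Icc (0:ℝ) T, A * (t + R) ^ (-α) * |V t| ^ p ≤ U'' t)
    (h3 : ∀ t ∈ Icc (0:ℝ) T, B * (t + R) ^ (-β) * |U t| ^ q ≤ V'' t)
    (h4U : 0 ≤ U 0) (h4U' : 0 < U' 0) (h4V : 0 ≤ V 0) (h4V' : 0 < V' 0)
    -- the threshold constant
    (hKK₀ : (a ^ (2 * p + 2) * 2 ^ (α + p * β + 2 * p + 1) * (q + 2) ^ (2 * p + 2)
        * (q + 1) ^ p / (A * B ^ p)
        * (1 - 2 ^ (-(a * δ))) ^ (-(2 * p + 2))) ^ ((p * q - 1)⁻¹) ≤ K) :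
    T ≤ 2 * max T₀ ((2 * q + 3) * U 0 / U' 0) := by
  by_contra! hT
  set x := max T₀ ((2 * q + 3) * U 0 / U' 0) with hx
  have hx0 : 0 < x := hT₀pos.trans_le (le_max_left _ _)
  have hRx : R ≤ x := hT₀R.trans (le_max_left _ _)
  have hT0 : 0 < T := by linarith
  have hxT : x ∈ Icc (0:ℝ) T := ⟨hx0.le, by linarith⟩
  have hsub : ∀ t ∈ Icc (0:ℝ) T, Icc 0 t ⊆ Icc 0 T := fun t ht => Icc_subset_Icc_right ht.2
  have hpq : 0 < p * q - 1 := by nlinarith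
  have tR : ∀ t ∈ Icc (0:ℝ) T, 0 < t + R := fun t ht => by linarith [ht.1]
  have slope : ∀ {F F' F'' : ℝ → ℝ},
      (∀ t ∈ Icc (0:ℝ) T, HasDerivWithinAt F (F' t) (Icc 0 T) t) →
      (∀ t ∈ Icc (0:ℝ) T, HasDerivWithinAt F' (F'' t) (Icc 0 T) t) →
      (∀ t ∈ Icc (0:ℝ) T, 0 ≤ F'' t) →
      ∀ t ∈ Icc (0:ℝ) T, F' 0 ≤ F' t ∧ F 0 + F' 0 * t ≤ F t := by
    intro F F' F'' hF hF' hF'' t ht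
    have s1 : ∀ t ∈ Icc (0:ℝ) T, F' 0 ≤ F' t := fun t ht =>
      le_of_hasDerivWithinAt_nonneg ht.1
        (fun s hs => (hF' s (hsub t ht hs)).mono (hsub t ht)) (fun s hs => hF'' s (hsub t ht hs))
    refine ⟨s1 t ht, ?_⟩
    have := le_of_hasDerivWithinAt_nonneg (f := fun s => F s - F' 0 * s)
      (f' := fun s => F' s - F' 0 * 1) ht.1
      (fun s hs => ((hF s (hsub t ht hs)).mono (hsub t ht)).sub
        ((hasDerivWithinAt_id s _).const_mul _))
      (fun s hs => by have := s1 s (hsub t ht hs); linarith)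
    simp only [mul_zero, sub_zero] at this
    linarith
  have sU := slope hU' hU'' fun t ht => le_trans (by have := tR t ht; positivity) (h2 t ht)
  have sV := slope hV' hV'' fun t ht => le_trans (by have := tR t ht; positivity) (h3 t ht)
  have hUp : ∀ t ∈ Icc (0:ℝ) T, 0 < U' t := fun t ht => h4U'.trans_le (sU t ht).1
  have hWlow : ∀ t ∈ Icc (0:ℝ) T, U' 0 * t ≤ U t - U 0 := fun t ht => by linarith [(sU t ht).2]
  have hWn : ∀ t ∈ Icc (0:ℝ) T, 0 ≤ U t - U 0 := fun t ht =>
    (mul_nonneg h4U'.le ht.1).trans (hWlow t ht)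
  have hVn : ∀ t ∈ Icc (0:ℝ) T, 0 ≤ V t := fun t ht => by
    linarith [(sV t ht).2, mul_nonneg h4V'.le ht.1]
  have first := first_order_of_second_order_system (W := fun t => U t - U 0) (W' := U') (W'' := U'')
    hp hq hα hβ hA hB hR (fun t ht => (hU' t ht).sub_const _) hU'' hV' hV'' (sub_self _) hWn hUp
    hVn (fun t ht => h4V'.trans_le (sV t ht).1)
    (fun t ht => by have := h2 t ht; rwa [abs_of_nonneg (hVn t ht)] at this)
    (fun t ht => by
      refine le_trans ?_ (h3 t ht)
      have h := tR t ht
      have hU : U t - U 0 ≤ |U t| := by linarith [le_abs_self (U t)]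
      have := rpow_le_rpow (hWn t ht) hU (by linarith : 0 ≤ q)
      gcongr)
  set γ := (p * q - 1) / (2 * p + 2) with hγ
  have hγ0 : 0 < γ := hδ.1.trans hδ.2
  have hp2 : 0 < 2 * p + 2 := by linarith
  have hγm : γ * (2 * p + 2) = p * q - 1 := by rw [hγ]; field_simp
  set D := A * (B / ((q + 1) * (q + 2))) ^ p / (q + 2) with hD
  have hD0 : 0 < D := by positivity
  set E := D ^ (2 * p + 2)⁻¹ * 2 ^ (-(a * γ + 1)) with hE
  have hE0 : 0 < E := by positivity
  have hbal' : (a * γ + 1) * (2 * p + 2) = α + p * β := by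
    linear_combination a * hγm - hbal
  have hEm : E ^ (2 * p + 2) = D * 2 ^ (-(α + p * β)) := by
    rw [hE, mul_rpow (by positivity) (by positivity), ← rpow_mul hD0.le, ← rpow_mul two_pos.le,
      inv_mul_cancel₀ hp2.ne', rpow_one, neg_mul, hbal']
  have hIcc : Icc x (2 * x) ⊆ Icc 0 T := Icc_subset_Icc hx0.le hT.le
  have blow := lt_rpow_neg_of_superlinear_growth (W := fun t => U t - U 0) (W' := U') (E := E)
    hx0 ha hγ0 (fun t ht => ((hU' t (hIcc ht)).sub_const _).mono hIcc)
    (fun t ht => (mul_pos h4U' (hx0.trans_le ht.1)).trans_le (hWlow t (hIcc ht)))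
    (fun t ht => by
      have htT := hIcc ht
      have ht0 : 0 < t := hx0.trans_le ht.1
      have hW0 := hWn t htT
      refine (rpow_le_rpow_iff (by positivity) (hUp t htT).le hp2).1 (le_trans ?_ (first t htT))
      rw [mul_rpow (by positivity) (by positivity), mul_rpow (by positivity) (by positivity), hEm,
        ← rpow_mul ht0.le, ← rpow_mul hW0, neg_mul, hbal',
        show (1 + γ) * (2 * p + 2) = p * (q + 2) + 1 by linear_combination hγm,
        mul_assoc D, ← mul_rpow two_pos.le ht0.le]
      have : (2 * t) ^ (-(α + p * β)) ≤ (t + R) ^ (-(α + p * β)) :=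
        rpow_le_rpow_of_nonpos (tR t htT) (by linarith [ht.1]) (by
          have : 0 ≤ α + p * β := by positivity
          linarith)
      gcongr)
  have hq3 : 0 < 2 * q + 3 := by linarith
  have hUx : (2 * q + 3) / (2 * q + 4) * (K * x ^ a) ≤ U x - U 0 := by
    have e1 : (2 * q + 3) * U 0 ≤ U' 0 * x := by
      have := le_max_right T₀ ((2 * q + 3) * U 0 / U' 0)
      rw [← hx, div_le_iff₀ h4U'] at this
      linarith
    have e2 := hWlow x hxT
    have e3 := h1 x hxT (le_max_left _ _)
    rw [div_mul_eq_mul_div, div_le_iff₀ (by linarith)]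
    nlinarith [mul_le_mul_of_nonneg_left e3 hq3.le]
  set L := 1 - (2:ℝ) ^ (-(a * δ)) with hL
  have hL0 : 0 < L := by
    have : (2:ℝ) ^ (-(a * δ)) < 1 :=
      rpow_lt_one_of_one_lt_of_neg one_lt_two (by have := mul_pos ha hδ.1; linarith)
    linarith
  have hLγ : L ≤ 1 - (2:ℝ) ^ (-(a * γ)) := by
    have : (2:ℝ) ^ (-(a * γ)) ≤ 2 ^ (-(a * δ)) :=
      rpow_le_rpow_of_exponent_le one_le_two (by nlinarith [hδ.2])
    linarith
  set θ := (2 * q + 3) / (2 * q + 4) with hθ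
  have hθ0 : 0 < θ := by positivity
  have lt1 : E / a * L < (θ * K) ^ (-γ) := by
    have e1 : (U x - U 0) ^ (-γ) ≤ (θ * (K * x ^ a)) ^ (-γ) :=
      rpow_le_rpow_of_nonpos (by positivity) hUx (by linarith)
    rw [← mul_assoc, mul_rpow (by positivity) (by positivity), ← rpow_mul hx0.le, mul_neg] at e1
    have hxp : 0 < x ^ (-(a * γ)) := by positivity
    have e2 : E / a * (x ^ (-(a * γ)) * L) ≤ E / a * (x ^ (-(a * γ)) * (1 - 2 ^ (-(a * γ)))) := by
      gcongr
    refine lt_of_mul_lt_mul_right ?_ hxp.le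
    linarith [e2.trans_lt (blow.trans_le e1)]
  have lt2 : D * 2 ^ (-(α + p * β)) * L ^ (2 * p + 2) * K ^ (p * q - 1)
      < a ^ (2 * p + 2) * 2 ^ p := by
    have e1 := rpow_lt_rpow (by positivity) lt1 hp2
    rw [mul_rpow (by positivity) (by positivity), div_rpow (by positivity) (by positivity), hEm,
      ← rpow_mul (by positivity), neg_mul, hγm,
      rpow_neg (show 0 ≤ θ * K by positivity),
      mul_rpow (by positivity) (by positivity)] at e1
    have hθp : (θ ^ (p * q - 1))⁻¹ ≤ 2 ^ p := by
      rw [← inv_rpow hθ0.le, hθ, inv_div]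
      exact rpow_shift_ratio_le hp hq
    have hap : 0 < a ^ (2 * p + 2) := by positivity
    have hKp : 0 < K ^ (p * q - 1) := by positivity
    have e2 := mul_lt_mul_of_pos_right e1 (mul_pos hap hKp)
    have e3 := mul_le_mul_of_nonneg_left hθp hap.le
    have e4 : D * 2 ^ (-(α + p * β)) / a ^ (2 * p + 2) * L ^ (2 * p + 2)
        * (a ^ (2 * p + 2) * K ^ (p * q - 1))
        = D * 2 ^ (-(α + p * β)) * L ^ (2 * p + 2) * K ^ (p * q - 1) := by
      field_simp
    have e5 : (θ ^ (p * q - 1) * K ^ (p * q - 1))⁻¹ * (a ^ (2 * p + 2) * K ^ (p * q - 1))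
        = a ^ (2 * p + 2) * (θ ^ (p * q - 1))⁻¹ := by
      field_simp
    rw [e4, e5] at e2
    linarith
  have hK₀ := (rpow_inv_le_iff_of_pos (by positivity) hK.le hpq).1 hKK₀
  have e1 := mul_le_mul_of_nonneg_left hK₀
    (show 0 ≤ D * 2 ^ (-(α + p * β)) * L ^ (2 * p + 2) by positivity)
  have e2 : D * 2 ^ (-(α + p * β)) * L ^ (2 * p + 2) *
      (a ^ (2 * p + 2) * 2 ^ (α + p * β + 2 * p + 1) * (q + 2) ^ (2 * p + 2)
        * (q + 1) ^ p / (A * B ^ p) * L ^ (-(2 * p + 2)))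
      = a ^ (2 * p + 2) * 2 ^ p * (2 ^ (p + 1) * (q + 2) ^ (p + 1)) := by
    have hq1 : 0 < q + 1 := by linarith
    have hq2 : 0 < q + 2 := by linarith
    rw [hD, div_rpow hB.le (by positivity), mul_rpow hq1.le hq2.le, rpow_neg two_pos.le,
      rpow_neg hL0.le, show α + p * β + 2 * p + 1 = (α + p * β) + (p + (p + 1)) by ring,
      rpow_add two_pos (α + p * β), rpow_add two_pos p (p + 1),
      show (q + 2) ^ (2 * p + 2) = (q + 2) ^ p * (q + 2) * (q + 2) ^ (p + 1) by
        rw [← rpow_add_one hq2.ne', ← rpow_add hq2]; ring_nf]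
    field_simp
  have e3 : 1 ≤ (2:ℝ) ^ (p + 1) * (q + 2) ^ (p + 1) :=
    one_le_mul_of_one_le_of_one_le (one_le_rpow one_le_two (by linarith))
      (one_le_rpow (by linarith) (by linarith))
  have e4 := mul_le_mul_of_nonneg_left e3 (show 0 ≤ a ^ (2 * p + 2) * 2 ^ p by positivity)
  rw [e2] at e1
  linarith
end

section
/- Let n ≥ 2, 1 < p ≤ q with n−1−(n−1)p/2 ≥ 0 and suppose (n−1)p(pq+2q+1)/2 − npq − (n+1)p = 1. Let C > 0, R > 0, j ≥ 1, a_j = 6·4^{j−1} − 2, and C_j > 0. Let U'', V'' be continuous nonnegative functions such that for all t ≥ R: U''(t) ≥ C ∫₀^{t−R} ρ^{n−1−(n−1)p/2}(t−ρ+R)^{−(n−1)p/2} ( ∫₀^{(t−ρ−R)/2} V''(s) ds )^p dρ and V''(t) ≥ C (t+R)^{−(n−1)q/2} ∫₀^{t−R} ρ^{n−1}(t−ρ+R)^{−(n−1)q/2} ( ∫₀^{(t−ρ−R)/2} U''(s) ds )^q dρ; and suppose U''(t) ≥ C_j (t−a_jR)^{n−1−(n−1)p/2} ( log( (t+(a_j²−2)R)/((a_j+2)(a_j−1)R)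 ) )^{((pq)^j−1)/(pq−1)} for all t ≥ a_jR. Then, with a_{j+1} = 4a_j + 6, one has U''(t) ≥ C_{j+1} (t−a_{j+1}R)^{n−1−(n−1)p/2} ( log( (t+(a_{j+1}²−2)R)/((a_{j+1}−1)(a_{j+1}+2)R) ) )^{((pq)^{j+1}−1)/(pq−1)} for all t ≥ a_{j+1}R, where C_{j+1} = (pq−1) C (C_j')^p / ( (nq+n+1)^p 2^{npq+(n+1)p+n−1} (6a_j)^{(n−1)p²q/2+(2n−1)pq+(3n+1)p/2} (pq)^{j+1} ) and C_j' = C C_j^q / ( n 2^{(n+1)q+n} 3^{nq} a_j^q ). -/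
open Real Set

/-- The integral of a nonnegative continuous function bounds from above the integral, over a
subinterval, of any continuous function below it. -/
lemma intervalIntegral_le_of_subinterval {f g : ℝ → ℝ} {a b c d : ℝ}
    (hf : ContinuousOn f (Icc a b)) (hf0 : ∀ x ∈ Icc a b, 0 ≤ f x)
    (hac : a ≤ c) (hcd : c ≤ d) (hdb : d ≤ b)
    (hg : ContinuousOn g (Icc c d)) (hgf : ∀ x ∈ Icc c d, g x ≤ f x) :
    ∫ x in c..d, g x ≤ ∫ x in a..b, f x := by
  have hsub : Icc c d ⊆ Icc a b := Icc_subset_Icc hac hdb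
  have hab : a ≤ b := hac.trans (hcd.trans hdb)
  have hfi : IntervalIntegrable f MeasureTheory.volume a b :=
    hf.intervalIntegrable_of_Icc hab
  calc ∫ x in c..d, g x ≤ ∫ x in c..d, f x :=
        intervalIntegral.integral_mono_on hcd (hg.intervalIntegrable_of_Icc hcd)
          ((hf.mono hsub).intervalIntegrable_of_Icc hcd) hgf
    _ ≤ ∫ x in a..b, f x := by
        refine intervalIntegral.integral_mono_interval hac hcd hdb ?_ hfi
        filter_upwards [MeasureTheory.ae_restrict_mem measurableSet_Ioc] with x hx
        exact hf0 x (Ioc_subset_Icc_self hx)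

/-- A lower bound `M` for a nonnegative continuous function on the last fifth of a segment of
length `w / 2` gives a lower bound for its integral. -/
lemma mul_le_integral_of_le_last_fifth {f : ℝ → ℝ} (hf : Continuous f) (hf0 : ∀ s, 0 ≤ f s)
    {A w M : ℝ} (hA : 0 ≤ A) (hw : 0 ≤ w)
    (hM : ∀ x, 2 * w / 5 ≤ x → x ≤ w / 2 → M ≤ f (A + x)) :
    w / 10 * M ≤ ∫ s in (0:ℝ)..(A + w / 2), f s := by
  have h := intervalIntegral_le_of_subinterval (a := 0) (b := A + w / 2)
    (c := A + 2 * w / 5) (d := A + w / 2) (g := fun _ => M)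
    hf.continuousOn (fun x _ => hf0 x) (by positivity) (by linarith) le_rfl
    continuousOn_const (fun x hx => by
      have := hM (x - A) (by linarith [hx.1]) (by linarith [hx.2])
      rwa [add_sub_cancel] at this)
  rw [intervalIntegral.integral_const, smul_eq_mul] at h
  calc w / 10 * M = (A + w / 2 - (A + 2 * w / 5)) * M := by ring
    _ ≤ _ := h

/-- Restriction of the integral in an iteration frame to a subinterval on which the integrand
has a continuous lower bound. -/
lemma integral_le_frame_integral {W : ℝ → ℝ} (hW : Continuous W) (hW0 : ∀ s, 0 ≤ W s)
    {κ β r R t c d : ℝ} {g : ℝ → ℝ} (hκ : 0 ≤ κ) (hr : 0 ≤ r) (hR : 0 < R)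
    (hc : 0 ≤ c) (hcd : c ≤ d) (hd : d ≤ t - R) (hg : ContinuousOn g (Icc c d))
    (hgle : ∀ ρ ∈ Icc c d, g ρ ≤
      ρ ^ κ * (t - ρ + R) ^ (-β) * (∫ s in (0:ℝ)..((t - ρ - R) / 2), W s) ^ r) :
    ∫ ρ in c..d, g ρ ≤ ∫ ρ in (0:ℝ)..(t - R),
      ρ ^ κ * (t - ρ + R) ^ (-β) * (∫ s in (0:ℝ)..((t - ρ - R) / 2), W s) ^ r := by
  refine intervalIntegral_le_of_subinterval ?_ ?_ hc hcd hd hg hgle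
  · have h1 : Continuous fun x : ℝ => ∫ s in (0:ℝ)..x, W s :=
      intervalIntegral.continuous_primitive (fun a b => hW.intervalIntegrable a b) 0
    refine ContinuousOn.mul (ContinuousOn.mul ?_ ?_) ?_
    · exact (continuous_id.rpow_const fun _ => Or.inr hκ).continuousOn
    · refine ContinuousOn.rpow_const (by fun_prop) fun x hx => Or.inl ?_
      have := hx.2
      linarith
    · exact ((h1.comp (by fun_prop : Continuous fun ρ : ℝ => (t - ρ - R) / 2)).rpow_const
        fun _ => Or.inr hr).continuousOn
  · intro x hx
    have h1 : 0 ≤ t - x + R := by linarith [hx.2]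
    have h2 : 0 ≤ ∫ s in (0:ℝ)..((t - x - R) / 2), W s :=
      intervalIntegral.integral_nonneg (by linarith [hx.2]) fun s _ => hW0 s
    have h3 := hx.1
    positivity

lemma integral_log_rpow_div {y K θ : ℝ} (hy : 0 ≤ y) (hK : 0 < K) (hθ : 0 ≤ θ) :
    ContinuousOn (fun ρ => log (1 + (y - ρ) / K) ^ θ / (y - ρ + K)) (Icc (y / 2) y) ∧
    ∫ ρ in (y / 2)..y, log (1 + (y - ρ) / K) ^ θ / (y - ρ + K) =
      log (1 + y / (2 * K)) ^ (θ + 1) / (θ + 1) := by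
  have hpos : ∀ ρ ∈ Icc (y / 2) y, 0 < 1 + (y - ρ) / K := fun ρ hρ => by
    have : 0 ≤ y - ρ := by linarith [hρ.2]
    positivity
  have hcont : ContinuousOn (fun ρ => log (1 + (y - ρ) / K) ^ θ / (y - ρ + K))
      (Icc (y / 2) y) := by
    refine ContinuousOn.div (ContinuousOn.rpow_const (ContinuousOn.log (by fun_prop)
      fun x hx => (hpos x hx).ne') fun _ _ => Or.inr hθ) (by fun_prop) fun x hx => ?_
    have := hx.2
    linarith
  refine ⟨hcont, ?_⟩
  have hle : y / 2 ≤ y := by linarith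
  rw [intervalIntegral.integral_eq_sub_of_hasDerivAt
    (f := fun ρ => -(log (1 + (y - ρ) / K) ^ (θ + 1) / (θ + 1)))
    (fun x hx => ?_) (hcont.intervalIntegrable_of_Icc hle)]
  · have h0 : (0:ℝ) ^ (θ + 1) = 0 := zero_rpow (by positivity)
    have h1 : (y - y / 2) / K = y / (2 * K) := by field_simp; ring
    simp [h0, h1]
  · rw [uIcc_of_le hle] at hx
    have h1 : HasDerivAt (fun ρ => 1 + (y - ρ) / K) (-1 / K) x := by
      simpa using (((hasDerivAt_id x).const_sub y).div_const K).const_add 1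
    have h2 := (((h1.log (hpos x hx).ne').rpow_const (p := θ + 1)
      (Or.inr (by linarith))).div_const (θ + 1)).neg
    refine h2.congr_deriv ?_
    have h3 : y - x + K ≠ 0 := by linarith [hx.2]
    have h4 : 1 + (y - x) / K = (y - x + K) / K := by field_simp; ring
    rw [add_sub_cancel_right, h4]
    field_simp

/-- Lower bound for `V` from a polynomial-logarithmic lower bound for `U`. -/
lemma le_of_frame_of_log_bound {U V : ℝ → ℝ} (hU : Continuous U) (hU0 : ∀ s, 0 ≤ U s)
    {a C D K R α e q γ ν : ℝ} (ha : 0 ≤ a) (hC : 0 < C) (hD : 0 < D) (hK : 0 < K) (hR : 0 < R)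
    (hα : 0 ≤ α) (he : 0 ≤ e) (hq : 0 < q) (hγ : 0 ≤ γ) (hν : 1 ≤ ν)
    (hframe : ∀ t : ℝ, R ≤ t →
      C * (t + R) ^ (-γ) * (∫ ρ in (0:ℝ)..(t - R),
          ρ ^ (ν - 1) * (t - ρ + R) ^ (-γ) * (∫ s in (0:ℝ)..((t - ρ - R) / 2), U s) ^ q) ≤ V t)
    (hbound : ∀ x, 0 ≤ x → D * x ^ α * log (1 + x / K) ^ e ≤ U (a * R + x))
    {x : ℝ} (hx : 0 ≤ x) :
    C * D ^ q / (ν * 2 ^ ((2 * α + 4) * q + 3 * ν)) * x ^ ((α + 1) * q + ν)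
      * (x + (2 * a + 2) * R) ^ (-(2 * γ)) * log (1 + 8 * x / (25 * K)) ^ (e * q)
      ≤ V ((2 * a + 1) * R + x) := by
  have haR : 0 ≤ a * R := by positivity
  set t := (2 * a + 1) * R + x with ht
  have htR : R ≤ t := by nlinarith
  have htR' : t + R = x + (2 * a + 2) * R := by rw [ht]; ring
  have hlog : 0 ≤ log (1 + 8 * x / (25 * K)) := log_nonneg (by
    have : 0 ≤ 8 * x / (25 * K) := by positivity
    linarith)
  set M := D * (x / 16) * (x / 4) ^ α * log (1 + 8 * x / (25 * K)) ^ e with hM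
  have hM0 : 0 ≤ M := by positivity
  have hinner : ∀ ρ ∈ Icc 0 (x / 5), M ≤ ∫ s in (0:ℝ)..((t - ρ - R) / 2), U s := by
    intro ρ hρ
    have hw : 4 * x / 5 ≤ x - ρ := by linarith [hρ.2]
    have hw0 : 0 ≤ x - ρ := by linarith
    have h := mul_le_integral_of_le_last_fifth hU hU0 haR hw0
      (M := D * (x / 4) ^ α * log (1 + 8 * x / (25 * K)) ^ e) (fun z hz _ => by
        have hz0 : 8 * x / 25 ≤ z := by linarith
        have hz1 : 0 ≤ z := by linarith
        refine le_trans ?_ (hbound z hz1)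
        have h5 : 8 * x / (25 * K) ≤ z / K := by
          rw [← div_div]; gcongr
        have h6 : 0 ≤ 8 * x / (25 * K) := by positivity
        have h7 : x / 4 ≤ z := by linarith
        gcongr)
    have hEq : (t - ρ - R) / 2 = a * R + (x - ρ) / 2 := by rw [ht]; ring
    rw [hEq]
    refine le_trans ?_ h
    have : x / 16 ≤ (x - ρ) / 10 := by linarith
    calc M = x / 16 * (D * (x / 4) ^ α * log (1 + 8 * x / (25 * K)) ^ e) := by rw [hM]; ring
      _ ≤ _ := by gcongr
  have hcont : Continuous fun ρ : ℝ => ρ ^ (ν - 1) * ((t + R) ^ (-γ) * M ^ q) :=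
    (continuous_id.rpow_const fun _ => Or.inr (by linarith)).mul continuous_const
  have hint := integral_le_frame_integral hU hU0 (κ := ν - 1) (β := γ) (r := q) (R := R)
    (t := t) (c := 0) (d := x / 5) (g := fun ρ => ρ ^ (ν - 1) * ((t + R) ^ (-γ) * M ^ q))
    (by linarith) hq.le hR le_rfl (by linarith) (by nlinarith) hcont.continuousOn
    (fun ρ hρ => by
      have h0 := hρ.1
      have h1 := hinner ρ hρ
      have h3 : 0 < t - ρ + R := by nlinarith [hρ.2]
      have h2 : (t + R) ^ (-γ) ≤ (t - ρ + R) ^ (-γ) :=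
        rpow_le_rpow_of_nonpos h3 (by linarith) (by linarith)
      have h4 : 0 ≤ t + R := by linarith
      rw [mul_assoc]
      gcongr)
  rw [intervalIntegral.integral_mul_const, integral_rpow (Or.inl (by linarith)),
    sub_add_cancel, zero_rpow (by linarith : ν ≠ 0), sub_zero] at hint
  refine le_trans ?_ (hframe t htR)
  have htpos : 0 < t + R := by linarith
  refine le_trans ?_ (mul_le_mul_of_nonneg_left hint (by positivity))
  have hMq : M ^ q = D ^ q * (x ^ ((α + 1) * q) / 2 ^ ((2 * α + 4) * q))
      * log (1 + 8 * x / (25 * K)) ^ (e * q) := by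
    have h16 : D * (x / 16) * (x / 4) ^ α = D * (x ^ (α + 1) / 2 ^ (2 * α + 4)) := by
      rw [div_rpow hx (by norm_num), rpow_add_of_nonneg hx hα (by norm_num), rpow_one,
        rpow_add (by norm_num : (0:ℝ) < 2), rpow_mul (by norm_num : (0:ℝ) ≤ 2)]
      norm_num
      field_simp
    rw [hM, h16, mul_rpow (by positivity) (by positivity), mul_rpow (by positivity) (by positivity),
      div_rpow (by positivity) (by positivity), ← rpow_mul hx, ← rpow_mul (by norm_num),
      ← rpow_mul hlog]
  have h2ν : (x / 8) ^ ν ≤ (x / 5) ^ ν :=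
    rpow_le_rpow (by positivity) (by linarith) (by linarith)
  have h8 : (x / 8) ^ ν = x ^ ν / 2 ^ (3 * ν) := by
    rw [div_rpow hx (by norm_num), rpow_mul (by norm_num : (0:ℝ) ≤ 2)]
    norm_num
  calc _ = C * (t + R) ^ (-γ) * ((x / 8) ^ ν / ν * ((t + R) ^ (-γ) * M ^ q)) := by
        rw [hMq, h8, ← htR', rpow_add_of_nonneg hx (by positivity) (by linarith),
          rpow_add (by norm_num : (0:ℝ) < 2),
          show -(2 * γ) = -γ + -γ by ring, rpow_add htpos]
        field_simp
    _ ≤ _ := by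
        have hν0 : 0 < ν := by linarith
        gcongr

/-- Lower bound for `U` from a polynomial-logarithmic lower bound for `V`, in the critical case
where the powers of `t` in the integrand add up to `-1`; this gains one power of the logarithm. -/
lemma le_of_frame_of_log_bound_critical {U V : ℝ → ℝ} (hV : Continuous V) (hV0 : ∀ s, 0 ≤ V s)
    {a C D K R α β e p m δ : ℝ} (ha : 4 ≤ a) (hC : 0 < C) (hD : 0 < D) (hR : 0 < R)
    (hK : (4 * a + 7) * R ≤ 8 * K)
    (hα : 0 ≤ α) (he : 0 ≤ e) (hp : 0 < p) (hm : 0 ≤ m) (hδ : 0 ≤ δ)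
    (hcrit : (m + 1) * p - δ * p - β = -1)
    (hframe : ∀ t : ℝ, R ≤ t →
      C * (∫ ρ in (0:ℝ)..(t - R),
          ρ ^ α * (t - ρ + R) ^ (-β) * (∫ s in (0:ℝ)..((t - ρ - R) / 2), V s) ^ p) ≤ U t)
    (hbound : ∀ x, 0 ≤ x → D * x ^ m * (x + (2 * a + 2) * R) ^ (-δ)
      * log (1 + 8 * x / (25 * K)) ^ e ≤ V ((2 * a + 1) * R + x))
    {y : ℝ} (hy : 0 ≤ y) :
    C * D ^ p / (2 ^ ((2 * m + 4) * p + α) * (2 * a) ^ ((m + 1) * p)) * y ^ α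
      * (log (1 + y / (16 * K)) ^ (e * p + 1) / (e * p + 1))
      ≤ U ((4 * a + 6) * R + y) := by
  have haR : 0 < a * R := by positivity
  have hK0 : 0 < K := by nlinarith
  set t := (4 * a + 6) * R + y with ht
  have htR : R ≤ t := by nlinarith
  set B := D ^ p / (2 ^ ((2 * m + 4) * p) * (2 * a) ^ ((m + 1) * p)) with hB
  have hB0 : 0 < B := by positivity
  have hinner : ∀ w, 0 ≤ w → D * w ^ (m + 1) / 2 ^ (2 * m + 4) * (w + (4 * a + 4) * R) ^ (-δ)
      * log (1 + w / (8 * K)) ^ e ≤ ∫ s in (0:ℝ)..((2 * a + 1) * R + w / 2), V s := by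
    intro w hw
    have h0 : 0 ≤ log (1 + w / (8 * K)) := log_nonneg (by
      have : 0 ≤ w / (8 * K) := by positivity
      linarith)
    have h := mul_le_integral_of_le_last_fifth hV hV0 (A := (2 * a + 1) * R) (by positivity) hw
      (M := D * (w / 4) ^ m * (w + (4 * a + 4) * R) ^ (-δ) * log (1 + w / (8 * K)) ^ e)
      (fun z hz hz' => by
        have hz1 : 0 ≤ z := by linarith
        refine le_trans ?_ (hbound z hz1)
        have h5 : w / (8 * K) ≤ 8 * z / (25 * K) := by
          rw [div_le_div_iff₀ (by positivity) (by positivity)]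
          nlinarith
        have h7 : w / 4 ≤ z := by linarith
        have h8 : (w + (4 * a + 4) * R) ^ (-δ) ≤ (z + (2 * a + 2) * R) ^ (-δ) :=
          rpow_le_rpow_of_nonpos (by positivity) (by nlinarith) (by linarith)
        have h9 : 0 ≤ w / (8 * K) := by positivity
        gcongr)
    refine le_trans ?_ h
    have hpw : w ^ (m + 1) / 2 ^ (2 * m + 4) = w / 16 * (w / 4) ^ m := by
      rw [div_rpow hw (by norm_num), rpow_add_of_nonneg hw hm (by norm_num), rpow_one,
        rpow_add (by norm_num : (0:ℝ) < 2), rpow_mul (by norm_num : (0:ℝ) ≤ 2)]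
      norm_num
      field_simp
    calc _ = w / 16 * (D * (w / 4) ^ m * (w + (4 * a + 4) * R) ^ (-δ)
          * log (1 + w / (8 * K)) ^ e) := by rw [mul_div_assoc, hpw]; ring
      _ ≤ _ := by gcongr; norm_num
  obtain ⟨hcont, hval⟩ := integral_log_rpow_div (y := y) (K := 8 * K) (θ := e * p) hy
    (by positivity) (by positivity)
  have hint := integral_le_frame_integral hV hV0 (κ := α) (β := β) (r := p) (R := R)
    (t := t) (c := y / 2) (d := y)
    (g := fun ρ => (y / 2) ^ α * B * (log (1 + (y - ρ) / (8 * K)) ^ (e * p) / (y - ρ + 8 * K)))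
    hα hp.le hR (by positivity) (by linarith) (by nlinarith) (continuousOn_const.mul hcont)
    (fun ρ hρ => by
      have hv : 0 ≤ y - ρ := by linarith [hρ.2]
      set w := y - ρ + 3 * R with hw
      have hw0 : 0 < w := by linarith
      set W := w + (4 * a + 4) * R with hW
      have hW0 : 0 < W := by positivity
      have hEq : (t - ρ - R) / 2 = (2 * a + 1) * R + w / 2 := by rw [hw, ht]; ring
      have hEq' : t - ρ + R = W := by rw [hW, hw, ht]; ring
      rw [hEq, hEq']
      have hl0 : 0 ≤ log (1 + (y - ρ) / (8 * K)) := log_nonneg (by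
        have : 0 ≤ (y - ρ) / (8 * K) := by positivity
        linarith)
      have hl : log (1 + (y - ρ) / (8 * K)) ≤ log (1 + w / (8 * K)) := by
        have : 0 ≤ (y - ρ) / (8 * K) := by positivity
        have : y - ρ ≤ w := by linarith
        gcongr
      have hl1 : 0 ≤ log (1 + w / (8 * K)) := hl0.trans hl
      have hWw : W / (2 * a) ≤ w := by
        rw [div_le_iff₀ (by positivity)]
        nlinarith [mul_nonneg hv (by linarith : (0:ℝ) ≤ 2 * a - 1)]
      have hWK : W ≤ y - ρ + 8 * K := by linarith
      have hin := rpow_le_rpow (by positivity) (hinner w hw0.le) hp.le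
      have hpow : (D * w ^ (m + 1) / 2 ^ (2 * m + 4) * W ^ (-δ) * log (1 + w / (8 * K)) ^ e) ^ p
          = D ^ p * w ^ ((m + 1) * p) / 2 ^ ((2 * m + 4) * p) * W ^ (-δ * p)
            * log (1 + w / (8 * K)) ^ (e * p) := by
        rw [mul_rpow (by positivity) (by positivity), mul_rpow (by positivity) (by positivity),
          div_rpow (by positivity) (by positivity), mul_rpow (by positivity) (by positivity),
          ← rpow_mul hw0.le, ← rpow_mul (by norm_num), ← rpow_mul hW0.le, ← rpow_mul hl1]
      rw [hpow] at hin
      have hwp : W ^ ((m + 1) * p) / (2 * a) ^ ((m + 1) * p) ≤ w ^ ((m + 1) * p) := by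
        rw [← div_rpow hW0.le (by positivity)]
        gcongr
      have hρ2 : y / 2 ≤ ρ := hρ.1
      have hexp : W ^ (-β) * (W ^ ((m + 1) * p) * W ^ (-δ * p)) = W⁻¹ := by
        rw [← rpow_add hW0, ← rpow_add hW0, ← rpow_neg_one]
        congr 1
        linarith
      calc (y / 2) ^ α * B * (log (1 + (y - ρ) / (8 * K)) ^ (e * p) / (y - ρ + 8 * K))
          ≤ ρ ^ α * B * (log (1 + w / (8 * K)) ^ (e * p) / W) := by
            have : 0 ≤ ρ := by linarith
            gcongr
        _ = ρ ^ α * W ^ (-β) * (D ^ p * (W ^ ((m + 1) * p) / (2 * a) ^ ((m + 1) * p))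
            / 2 ^ ((2 * m + 4) * p) * W ^ (-δ * p) * log (1 + w / (8 * K)) ^ (e * p)) := by
            rw [div_eq_mul_inv _ W, ← hexp, hB]
            field_simp
        _ ≤ ρ ^ α * W ^ (-β) * (D ^ p * w ^ ((m + 1) * p)
            / 2 ^ ((2 * m + 4) * p) * W ^ (-δ * p) * log (1 + w / (8 * K)) ^ (e * p)) := by
            have : 0 ≤ ρ := by linarith
            gcongr
        _ ≤ _ := by
            have : 0 ≤ ρ := by linarith
            gcongr)
  rw [intervalIntegral.integral_const_mul, hval] at hint
  refine le_trans ?_ (hframe t htR)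
  refine le_trans (le_of_eq ?_) (mul_le_mul_of_nonneg_left hint hC.le)
  rw [hB, div_rpow hy (by norm_num), rpow_add (by norm_num : (0:ℝ) < 2),
    show 2 * (8 * K) = 16 * K by ring]
  field_simp

/-- Comparison of the constants produced by the two integral estimates. -/
lemma iteration_constant_le {ν p q a α m : ℝ} (hν : 2 ≤ ν) (hp : 1 < p) (hq : 1 < q)
    (ha : 4 ≤ a) (hα0 : 0 ≤ α) (hα : α = ν - 1 - (ν - 1) * p / 2) (hm : m = (α + 1) * q + ν) :
    (ν * 2 ^ ((2 * α + 4) * q + 3 * ν)) ^ p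
        * (2 ^ ((2 * m + 4) * p + α) * (2 * a) ^ ((m + 1) * p))
      ≤ (ν * 2 ^ ((ν + 1) * q + ν) * 3 ^ (ν * q) * a ^ q) ^ p
        * ((ν * q + ν + 1) ^ p * 2 ^ (ν * p * q + (ν + 1) * p + ν - 1)
          * (6 * a) ^ ((ν - 1) * p ^ 2 * q / 2 + (2 * ν - 1) * p * q + (3 * ν + 1) * p / 2)) := by
  have hν0 : 0 < ν := by linarith
  have ha0 : 0 < a := by linarith
  have hpq : p < p * q := by nlinarith
  have hppq : p * q < p ^ 2 * q := by nlinarith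
  set δ := (ν - 1) * p ^ 2 * q + (ν - 1) * p * q + (ν - 1) * p / 2 with hδ
  have hE : (ν - 1) * p ^ 2 * q / 2 + (2 * ν - 1) * p * q + (3 * ν + 1) * p / 2
      = δ + (m + 1) * p := by rw [hδ, hm, hα]; ring
  have hδ0 : 0 ≤ δ := by
    have : 0 ≤ ν - 1 := by linarith
    positivity
  have hm1 : 0 ≤ (m + 1) * p := by
    have : 0 ≤ m := by rw [hm]; positivity
    positivity
  have hexp : ((2 * α + 4) * q + 3 * ν) * p + ((2 * m + 4) * p + α)
      ≤ ((ν + 1) * q + ν) * p + ν * q * p + 2 * q * p + (ν * p * q + (ν + 1) * p + ν - 1)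
        + 4 * δ := by
    rw [hδ, hm, hα]
    nlinarith [mul_nonneg (by linarith : (0:ℝ) ≤ ν - 2) (by linarith : (0:ℝ) ≤ p * q - p),
      mul_nonneg (by linarith : (0:ℝ) ≤ ν - 2) (by linarith : (0:ℝ) ≤ p ^ 2 * q - p * q)]
  have h6 : (2:ℝ) ^ (4 * δ) * (2 * a) ^ ((m + 1) * p) ≤ (6 * a) ^ (δ + (m + 1) * p) := by
    rw [rpow_add (by positivity), rpow_mul (by norm_num : (0:ℝ) ≤ 2)]
    gcongr
    · norm_num; linarith
    · norm_num
  have hν1 : (1:ℝ) ≤ (ν * q + ν + 1) ^ p := one_le_rpow (by nlinarith) (by linarith)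
  have h3 : (2:ℝ) ^ (ν * q) ≤ 3 ^ (ν * q) := by gcongr; norm_num
  have h4 : (2:ℝ) ^ (2 * q) ≤ a ^ q := by
    rw [rpow_mul (by norm_num : (0:ℝ) ≤ 2)]
    gcongr
    norm_num; linarith
  have h2 : (0:ℝ) < 2 := by norm_num
  rw [hE]
  have hX : 0 < (2 * a) ^ ((m + 1) * p) := by positivity
  generalize (2 * a) ^ ((m + 1) * p) = X at h6 hX ⊢
  calc _ = ν ^ p * (2 ^ (((2 * α + 4) * q + 3 * ν) * p + ((2 * m + 4) * p + α))
          * X) := by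
        rw [mul_rpow hν0.le (by positivity), ← rpow_mul h2.le, rpow_add h2 (((2 * α + 4) * q + 3 * ν) * p)]
        ring
    _ ≤ ν ^ p * (2 ^ (((ν + 1) * q + ν) * p + ν * q * p + 2 * q * p
          + (ν * p * q + (ν + 1) * p + ν - 1) + 4 * δ) * X) := by
        gcongr
        norm_num
    _ = (ν * 2 ^ ((ν + 1) * q + ν) * 2 ^ (ν * q) * 2 ^ (2 * q)) ^ p
        * (1 * 2 ^ (ν * p * q + (ν + 1) * p + ν - 1)
          * (2 ^ (4 * δ) * X)) := by
        rw [mul_rpow (by positivity) (by positivity), mul_rpow (by positivity) (by positivity),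
          mul_rpow (by positivity) (by positivity), ← rpow_mul h2.le, ← rpow_mul h2.le,
          ← rpow_mul h2.le, rpow_add h2 _ (4 * δ), rpow_add h2 _ (ν * p * q + (ν + 1) * p + ν - 1),
          rpow_add h2 _ (2 * q * p), rpow_add h2 _ (ν * q * p)]
        ring
    _ ≤ _ := by gcongr

/-- Inductive step of the iteration argument: if `U''` satisfies the `j`-th
iteration bound with constant `C_j`, then it satisfies the `(j+1)`-st bound with
`a_{j+1} = 4a_j + 6` and the explicitly given constant `C_{j+1}`. -/
theorem iteration_inductive_step
    (n : ℕ) (p q C R : ℝ) (j : ℕ) (aj Cj Cj' Cj1 : ℝ) (U'' V'' : ℝ → ℝ)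
    (hn : 2 ≤ n) (hp : 1 < p) (hpq : p ≤ q)
    (hexp : 0 ≤ (n : ℝ) - 1 - ((n : ℝ) - 1) * p / 2)
    (hcrit : ((n : ℝ) - 1) * p * (p * q + 2 * q + 1) / 2
        - (n : ℝ) * p * q - ((n : ℝ) + 1) * p = 1)
    (hC : 0 < C) (hR : 0 < R) (hj : 1 ≤ j)
    (haj : aj = 6 * (4:ℝ) ^ (j - 1) - 2)
    (hCj : 0 < Cj)
    (hCj' : Cj' = C * Cj ^ q / ((n : ℝ) * 2 ^ (((n : ℝ) + 1) * q + (n : ℝ))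
        * 3 ^ ((n : ℝ) * q) * aj ^ q))
    (hCj1 : Cj1 = (p * q - 1) * C * Cj' ^ p
        / (((n : ℝ) * q + (n : ℝ) + 1) ^ p
          * 2 ^ ((n : ℝ) * p * q + ((n : ℝ) + 1) * p + (n : ℝ) - 1)
          * (6 * aj) ^ (((n : ℝ) - 1) * p ^ 2 * q / 2 + (2 * (n : ℝ) - 1) * p * q
              + (3 * (n : ℝ) + 1) * p / 2)
          * (p * q) ^ (j + 1)))
    (hUcont : Continuous U'') (hVcont : Continuous V'')
    (hUnonneg : ∀ s : ℝ, 0 ≤ U'' s) (hVnonneg : ∀ s : ℝ, 0 ≤ V'' s)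
    (hUframe : ∀ t : ℝ, R ≤ t →
      C * (∫ ρ in (0:ℝ)..(t - R),
          ρ ^ ((n : ℝ) - 1 - ((n : ℝ) - 1) * p / 2)
          * (t - ρ + R) ^ (-(((n : ℝ) - 1) * p / 2))
          * (∫ s in (0:ℝ)..((t - ρ - R) / 2), V'' s) ^ p)
        ≤ U'' t)
    (hVframe : ∀ t : ℝ, R ≤ t →
      C * (t + R) ^ (-(((n : ℝ) - 1) * q / 2)) * (∫ ρ in (0:ℝ)..(t - R),
          ρ ^ ((n : ℝ) - 1) * (t - ρ + R) ^ (-(((n : ℝ) - 1) * q / 2))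
          * (∫ s in (0:ℝ)..((t - ρ - R) / 2), U'' s) ^ q)
        ≤ V'' t)
    (hUj : ∀ t : ℝ, aj * R ≤ t →
      Cj * (t - aj * R) ^ ((n : ℝ) - 1 - ((n : ℝ) - 1) * p / 2)
        * (Real.log ((t + (aj ^ 2 - 2) * R) / ((aj + 2) * (aj - 1) * R)))
            ^ (((p * q) ^ j - 1) / (p * q - 1))
        ≤ U'' t) :
    ∀ t : ℝ, (4 * aj + 6) * R ≤ t →
      Cj1 * (t - (4 * aj + 6) * R) ^ ((n : ℝ) - 1 - ((n : ℝ) - 1) * p / 2)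
        * (Real.log ((t + ((4 * aj + 6) ^ 2 - 2) * R)
            / (((4 * aj + 6) - 1) * ((4 * aj + 6) + 2) * R)))
            ^ (((p * q) ^ (j + 1) - 1) / (p * q - 1))
        ≤ U'' t := by
  have hn2 : (2:ℝ) ≤ n := by exact_mod_cast hn
  have hq : 1 < q := hp.trans_le hpq
  have ha : 4 ≤ aj := by
    have : (1:ℝ) ≤ 4 ^ (j - 1) := one_le_pow₀ (by norm_num)
    rw [haj]; linarith
  set ν : ℝ := (n : ℝ)
  set α := ν - 1 - (ν - 1) * p / 2 with hα
  set P := p * q with hP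
  have hP1 : 1 < P := by rw [hP]; nlinarith
  set e := (P ^ j - 1) / (P - 1) with he
  have hPj : 1 ≤ P ^ j := one_le_pow₀ hP1.le
  have he0 : 0 ≤ e := div_nonneg (by linarith) (by linarith)
  have he1 : (P ^ (j + 1) - 1) / (P - 1) = e * q * p + 1 := by
    have : P - 1 ≠ 0 := by linarith
    rw [show e * q * p = e * P by rw [hP]; ring, he, pow_succ]
    field_simp
    ring
  set m := (α + 1) * q + ν with hm
  have hm0 : 0 ≤ m := by positivity
  have hK0 : 0 < (aj + 2) * (aj - 1) := mul_pos (by linarith) (by linarith)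
  have ha1 : aj - 1 ≠ 0 := by linarith
  have hKR : (4 * aj + 7) * R ≤ 8 * ((aj + 2) * (aj - 1) * R) := by
    have : 4 * aj + 7 ≤ 8 * ((aj + 2) * (aj - 1)) := by nlinarith
    calc (4 * aj + 7) * R ≤ 8 * ((aj + 2) * (aj - 1)) * R := by gcongr
      _ = _ := by ring
  have hV := fun {x : ℝ} (hx : 0 ≤ x) =>
    le_of_frame_of_log_bound (K := (aj + 2) * (aj - 1) * R) hUcont hUnonneg
      (by linarith : 0 ≤ aj) hC hCj (by positivity) hR hexp he0 (by linarith)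
      (by nlinarith : 0 ≤ (ν - 1) * q / 2) (by linarith : 1 ≤ ν) hVframe
      (fun x hx => by
        have h := hUj (aj * R + x) (by linarith)
        rw [add_sub_cancel_left] at h
        convert h using 4
        field_simp
        ring) hx
  intro t ht
  set y := t - (4 * aj + 6) * R with hy
  have hy0 : 0 ≤ y := by linarith
  have hden : 0 < ν * 2 ^ ((2 * α + 4) * q + 3 * ν) := by positivity
  have hU := le_of_frame_of_log_bound_critical (β := (ν - 1) * p / 2) (m := m)
    (e := e * q) hVcont hVnonneg ha hC (by positivity) hR
    hKR hexp (by positivity) (by linarith) hm0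
    (by nlinarith : 0 ≤ 2 * ((ν - 1) * q / 2))
    (by rw [hm, hα]; linear_combination -hcrit) hUframe (fun x hx => hV hx) hy0
  rw [show (4 * aj + 6) * R + y = t by rw [hy]; ring] at hU
  refine le_trans ?_ hU
  have hlogarg : (t + ((4 * aj + 6) ^ 2 - 2) * R) / ((4 * aj + 6 - 1) * (4 * aj + 6 + 2) * R)
      = 1 + y / ((4 * aj + 6 - 1) * (4 * aj + 6 + 2) * R) := by
    have h1 : 4 * aj + 6 - 1 ≠ 0 := by linarith
    have h2 : 4 * aj + 6 + 2 ≠ 0 := by linarith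
    rw [hy]
    field_simp
    ring
  rw [hlogarg, he1]
  have hKK : 16 * ((aj + 2) * (aj - 1) * R) ≤ (4 * aj + 6 - 1) * (4 * aj + 6 + 2) * R := by
    nlinarith [mul_nonneg hR.le (by linarith : 0 ≤ aj)]
  have hK1 : 0 < (4 * aj + 6 - 1) * (4 * aj + 6 + 2) * R := lt_of_lt_of_le (by positivity) hKK
  have hlog0 : 0 ≤ log (1 + y / ((4 * aj + 6 - 1) * (4 * aj + 6 + 2) * R)) := log_nonneg (by
    have := div_nonneg hy0 hK1.le
    linarith)
  have hlog : log (1 + y / ((4 * aj + 6 - 1) * (4 * aj + 6 + 2) * R))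
      ≤ log (1 + y / (16 * ((aj + 2) * (aj - 1) * R))) := by
    have := div_nonneg hy0 hK1.le
    gcongr
  have hlast : (P - 1) / P ^ (j + 1) ≤ 1 / (e * q * p + 1) := by
    have h1 : 1 < P ^ (j + 1) := one_lt_pow₀ hP1 (by simp)
    rw [← he1, one_div_div]
    gcongr
    linarith
  have hconst := iteration_constant_le hn2 hp hq ha hexp hα hm
  have hCj1_le : Cj1 ≤ C * (C * Cj ^ q / (ν * 2 ^ ((2 * α + 4) * q + 3 * ν))) ^ p
      / (2 ^ ((2 * m + 4) * p + α) * (2 * aj) ^ ((m + 1) * p)) * (1 / (e * q * p + 1)) := by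
    rw [hCj1, hCj', div_rpow (by positivity) (by positivity),
      div_rpow (by positivity) hden.le]
    have hsplit : ∀ A B D E F : ℝ, A * C * (B / D) / (E * F) = C * B / (D * E) * (A / F) :=
      fun A B D E F => by simp only [div_eq_mul_inv, mul_inv]; ring
    have hjoin : ∀ B D E : ℝ, C * (B / D) / E = C * B / (D * E) :=
      fun B D E => by simp only [div_eq_mul_inv, mul_inv]; ring
    rw [hsplit, hjoin]
    have hP0 : 0 ≤ (P - 1) / P ^ (j + 1) := div_nonneg (by linarith) (by positivity)
    gcongr
  refine (mul_le_mul (mul_le_mul_of_nonneg_right hCj1_le (rpow_nonneg hy0 α))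
    (rpow_le_rpow hlog0 hlog (by positivity)) (rpow_nonneg hlog0 _) (by positivity)).trans_eq ?_
  ring
end
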